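/- Let ν be a probability measure on [0,1] and let σ be the associated geodesic mean, A σ B := ∫_0^1 A #_α B dν(α). Then for all positive definite n×n complex matrices A, B and every k = 1,…,n, (∏_{j=n+1-k}^n μ_j(A σ B))^{1/k} ≥ ∫_0^1 a^{1-α} b^{α} dν(α), where a := (∏_{j=n+1-k}^n μ_j(A))^{1/k} and b := (∏_{j=n+1-k}^n μ_j(B))^{1/k}. -/

import Mathlib

open scoped ComplexOrder

section Defs

variable {n : ℕ}

/-- eigenvalues of a Hermitian matrix listed in increasing order -/
noncomputable def eigUp {A : Matrix (Fin n) (Fin n) ℂ} (hA : A.IsHermitian) : Fin n → ℝ :=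
  fun i => hA.eigenvalues (Tuple.sort hA.eigenvalues i)

/-- eigenvalues of a Hermitian matrix listed in decreasing order: `eigDown hA i = μ_{i+1}(A)` -/
noncomputable def eigDown {A : Matrix (Fin n) (Fin n) ℂ} (hA : A.IsHermitian) : Fin n → ℝ :=
  fun i => eigUp hA i.rev

/-- the product of the `k` smallest eigenvalues, `∏_{j=1}^k μ_{n+1-j}(A)` -/
noncomputable def prodSmall (A : Matrix (Fin n) (Fin n) ℂ) (k : ℕ) : ℝ :=
  if hA : A.IsHermitian then
    ∏ i ∈ Finset.univ.filter (fun i : Fin n => (i : ℕ) < k), eigUp hA i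
  else 0

/-- the product of the `k` largest eigenvalues, `∏_{j=1}^k μ_j(A)` -/
noncomputable def prodLarge (A : Matrix (Fin n) (Fin n) ℂ) (k : ℕ) : ℝ :=
  if hA : A.IsHermitian then
    ∏ i ∈ Finset.univ.filter (fun i : Fin n => (i : ℕ) < k), eigDown hA i
  else 0

/-- the sum of the `k` smallest eigenvalues, `∑_{j=1}^k μ_{n+1-j}(A)` -/
noncomputable def sumSmall (A : Matrix (Fin n) (Fin n) ℂ) (k : ℕ) : ℝ :=
  if hA : A.IsHermitian then
    ∑ i ∈ Finset.univ.filter (fun i : Fin n => (i : ℕ) < k), eigUp hA i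
  else 0

/-- A doubly concave function on an interval `Ω ⊆ [0,∞)`. -/
structure DoublyConcaveOn (f : ℝ → ℝ) (Ω : Set ℝ) : Prop where
  subset_Ici : Ω ⊆ Set.Ici (0 : ℝ)
  nonneg : ∀ x ∈ Ω, 0 ≤ f x
  continuousOn : ContinuousOn f Ω
  concaveOn : ConcaveOn ℝ Ω f
  geomConcave : ∀ x ∈ Ω, ∀ y ∈ Ω, Real.sqrt (f x * f y) ≤ f (Real.sqrt (x * y))

/-- `𝔼_p(Z) := (𝔼(Z^p))^{1/p}` -/
noncomputable def Ep {n m : ℕ} (E : Matrix (Fin n) (Fin n) ℂ →ₗ[ℂ] Matrix (Fin m) (Fin m) ℂ)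
    (p : ℝ) (Z : Matrix (Fin n) (Fin n) ℂ) : Matrix (Fin m) (Fin m) ℂ :=
  cfc (fun x : ℝ => x ^ (1 / p)) (E (cfc (fun x : ℝ => x ^ p) Z))

/-- the power `p`-mean `A β_p B := ((A^p + B^p)/2)^{1/p}` -/
noncomputable def betaP (p : ℝ) (A B : Matrix (Fin n) (Fin n) ℂ) : Matrix (Fin n) (Fin n) ℂ :=
  cfc (fun x : ℝ => x ^ (1 / p))
    ((2 : ℂ)⁻¹ • (cfc (fun x : ℝ => x ^ p) A + cfc (fun x : ℝ => x ^ p) B))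

noncomputable def sqrtM (A : Matrix (Fin n) (Fin n) ℂ) : Matrix (Fin n) (Fin n) ℂ :=
  cfc Real.sqrt A

noncomputable def invSqrtM (A : Matrix (Fin n) (Fin n) ℂ) : Matrix (Fin n) (Fin n) ℂ :=
  cfc (fun x : ℝ => (Real.sqrt x)⁻¹) A

/-- operator mean with representing function `h`: `A σ B = A^{1/2} h(A^{-1/2} B A^{-1/2}) A^{1/2}` -/
noncomputable def opMean (h : ℝ → ℝ) (A B : Matrix (Fin n) (Fin n) ℂ) :
    Matrix (Fin n) (Fin n) ℂ :=
  sqrtM A * cfc h (invSqrtM A * B * invSqrtM A) * sqrtM A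

/-- the weighted geometric mean `A #_α B` -/
noncomputable def sharp (α : ℝ) (A B : Matrix (Fin n) (Fin n) ℂ) : Matrix (Fin n) (Fin n) ℂ :=
  sqrtM A * cfc (fun x : ℝ => x ^ α) (invSqrtM A * B * invSqrtM A) * sqrtM A

/-- the (real) determinant of a Hermitian matrix -/
noncomputable def rdet (A : Matrix (Fin n) (Fin n) ℂ) : ℝ := (A.det).re

open Classical in
/-- the derived anti-norm `‖A‖_! = ‖A^{-p}‖^{-1/p}` for invertible positive `A`, `0` otherwise. -/
noncomputable def derivedAntiNorm (N : Matrix (Fin n) (Fin n) ℂ → ℝ) (p : ℝ)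
    (A : Matrix (Fin n) (Fin n) ℂ) : ℝ :=
  if IsUnit A.det then (N (cfc (fun x : ℝ => x ^ (-p)) A)) ^ (-(1 / p)) else 0

end Defs

attribute [local instance] Matrix.normedAddCommGroup Matrix.normedSpace

/-- geodesic mean associated to a probability measure on `[0,1]` -/
noncomputable def gmean {n : ℕ} (ν : MeasureTheory.Measure ℝ) (A B : Matrix (Fin n) (Fin n) ℂ) :
    Matrix (Fin n) (Fin n) ℂ :=
  ∫ α, sharp α A B ∂ν

namespace Matrix

/-- A form of the Cauchy–Binet formula, summing over all maps instead of over subsets. -/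
theorem factorial_mul_det_mul {m n R : Type*} [Fintype m] [DecidableEq m] [Fintype n] [CommRing R]
    (M : Matrix m n R) (N : Matrix n m R) :
    ((Fintype.card m).factorial : R) * (M * N).det =
      ∑ f : m → n, (M.submatrix id f).det * (N.submatrix f id).det := by
  classical
  have expand : (M * N).det = ∑ f : m → n, (M.submatrix id f).det * ∏ i, N (f i) i := by
    simp only [det_apply', mul_apply, Finset.prod_univ_sum, Finset.mul_sum,
      Fintype.piFinset_univ, Finset.sum_mul]
    rw [Finset.sum_comm]
    simp [Finset.prod_mul_distrib, mul_assoc]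
  have permuted (τ : Equiv.Perm m) : (M * N).det =
      ∑ f : m → n, (M.submatrix id f).det * (Equiv.Perm.sign τ * ∏ i, N (f (τ i)) i) := by
    rw [expand]
    refine (Equiv.sum_comp (τ.symm.arrowCongr (Equiv.refl n)) _).symm.trans
      (Finset.sum_congr rfl fun f _ => ?_)
    have h : (M.submatrix id (f ∘ τ)).det = Equiv.Perm.sign τ * (M.submatrix id f).det :=
      det_permute' τ (M.submatrix id f)
    change (M.submatrix id (f ∘ τ)).det * ∏ i, N (f (τ i)) i = _
    rw [h]
    ring
  calc
    _ = ∑ τ : Equiv.Perm m, (M * N).det := by simp [Fintype.card_perm]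
    _ = ∑ τ : Equiv.Perm m, ∑ f : m → n,
        (M.submatrix id f).det * (Equiv.Perm.sign τ * ∏ i, N (f (τ i)) i) :=
      Finset.sum_congr rfl fun τ _ => permuted τ
    _ = _ := by
      rw [Finset.sum_comm]
      simp only [← Finset.mul_sum]
      simp [det_apply']

variable {m n : Type*} [Fintype m] [DecidableEq m] [Fintype n]

theorem factorial_mul_det_conjTranspose_mul (W Z : Matrix n m ℂ) :
    ((Fintype.card m).factorial : ℂ) * (Wᴴ * Z).det =
      ∑ f : m → n, star (W.submatrix f id).det * (Z.submatrix f id).det := by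
  rw [factorial_mul_det_mul]
  simp only [← det_conjTranspose, conjTranspose_submatrix]

theorem factorial_mul_det_weighted_gram_re [DecidableEq n] (W : Matrix n m ℂ) (d : n → ℝ) :
    ((Fintype.card m).factorial : ℝ) * (Wᴴ * diagonal (fun i => (d i : ℂ)) * W).det.re =
      ∑ f : m → n, (∏ i, d (f i)) * Complex.normSq (W.submatrix f id).det := by
  have h := factorial_mul_det_conjTranspose_mul W (diagonal (fun i => (d i : ℂ)) * W)
  have hf (f : m → n) : star (W.submatrix f id).det *
      ((diagonal (fun i => (d i : ℂ)) * W).submatrix f id).det =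
      (((∏ i, d (f i)) * Complex.normSq (W.submatrix f id).det : ℝ) : ℂ) := by
    have : (diagonal (fun i => (d i : ℂ)) * W).submatrix f id =
        of fun i j => (d (f i) : ℂ) * W.submatrix f id i j := by
      ext i j; simp [diagonal_mul]
    rw [this, det_mul_column, mul_left_comm, Complex.star_def, ← Complex.normSq_eq_conj_mul_self]
    push_cast
    rfl
  simp only [hf, ← Matrix.mul_assoc] at h
  have h' := congrArg Complex.re h
  rw [← Complex.ofReal_sum, Complex.ofReal_re] at h'
  rw [← h', ← Complex.ofReal_natCast, Complex.re_ofReal_mul]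

theorem factorial_mul_det_gram_re (W : Matrix n m ℂ) :
    ((Fintype.card m).factorial : ℝ) * (Wᴴ * W).det.re =
      ∑ f : m → n, Complex.normSq (W.submatrix f id).det := by
  classical
  simpa using factorial_mul_det_weighted_gram_re W (fun _ => (1 : ℝ))

/-- The Cauchy–Schwarz inequality for determinants of Gram matrices. -/
theorem normSq_det_conjTranspose_mul_le (W Z : Matrix n m ℂ) :
    Complex.normSq (Wᴴ * Z).det ≤ (Wᴴ * W).det.re * (Zᴴ * Z).det.re := by
  have hk : (0 : ℝ) < ((Fintype.card m).factorial : ℝ) := by positivity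
  have h : ((Fintype.card m).factorial : ℝ) * ‖(Wᴴ * Z).det‖ ≤
      ∑ f : m → n, ‖(W.submatrix f id).det‖ * ‖(Z.submatrix f id).det‖ := by
    calc
      _ = ‖((Fintype.card m).factorial : ℂ) * (Wᴴ * Z).det‖ := by simp
      _ ≤ _ := by
        rw [factorial_mul_det_conjTranspose_mul]
        refine (norm_sum_le _ _).trans_eq ?_
        simp only [norm_mul, norm_star]
  have hcs := Finset.sum_mul_sq_le_sq_mul_sq Finset.univ
    (fun f : m → n => ‖(W.submatrix f id).det‖) (fun f => ‖(Z.submatrix f id).det‖)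
  simp only [← Complex.normSq_eq_norm_sq, ← factorial_mul_det_gram_re] at hcs
  have hsq := (pow_le_pow_left₀ (by positivity) h 2).trans hcs
  rw [mul_pow, ← Complex.normSq_eq_norm_sq] at hsq
  refine le_of_mul_le_mul_left ?_ (pow_pos hk 2)
  linarith

end Matrix

/-- Log-convexity, in the exponent, of a finite positive combination of powers. -/
theorem sum_mul_rpow_le_rpow_mul_rpow {ι : Type*} (s : Finset ι) (w p : ι → ℝ)
    (hw : ∀ i ∈ s, 0 ≤ w i) (hp : ∀ i ∈ s, 0 < p i) {t : ℝ} (ht0 : 0 ≤ t) (ht1 : t ≤ 1)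
    (hpos : 0 < ∑ i ∈ s, w i) :
    ∑ i ∈ s, p i ^ t * w i ≤ (∑ i ∈ s, w i) ^ (1 - t) * (∑ i ∈ s, p i * w i) ^ t := by
  set S := ∑ i ∈ s, w i
  set S' := ∑ i ∈ s, p i * w i with hS'
  have hw' : ∑ i ∈ s, w i / S = 1 := by rw [← Finset.sum_div]; exact div_self hpos.ne'
  have hconc := (Real.concaveOn_rpow ht0 ht1).le_map_sum (t := s) (w := fun i => w i / S) (p := p)
    (fun i hi => div_nonneg (hw i hi) hpos.le) hw' (fun i hi => (hp i hi).le)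
  have e1 : ∑ i ∈ s, (w i / S) • p i ^ t = (∑ i ∈ s, p i ^ t * w i) / S := by
    rw [Finset.sum_div]
    exact Finset.sum_congr rfl fun i _ => by rw [smul_eq_mul]; ring
  have e2 : ∑ i ∈ s, (w i / S) • p i = S' / S := by
    rw [hS', Finset.sum_div]
    exact Finset.sum_congr rfl fun i _ => by rw [smul_eq_mul]; ring
  have hS'0 : 0 ≤ S' := Finset.sum_nonneg fun i hi => mul_nonneg (hp i hi).le (hw i hi)
  rw [e1, e2, div_le_iff₀ hpos, Real.div_rpow hS'0 hpos.le] at hconc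
  refine hconc.trans_eq ?_
  rw [Real.rpow_sub hpos, Real.rpow_one]
  ring

namespace Matrix

variable {m n : Type*} [Fintype m] [DecidableEq m] [Fintype n] [DecidableEq n]

theorem conjTranspose_diagonal_ofReal {n : Type*} [DecidableEq n] (x : n → ℝ) :
    (diagonal (fun i => (x i : ℂ)))ᴴ = diagonal (fun i => (x i : ℂ)) := by
  rw [diagonal_conjTranspose]
  congr 1; ext i; simp

theorem inv_diagonal_ofReal {x : n → ℝ} (hx : ∀ i, x i ≠ 0) :
    (diagonal (fun i => (x i : ℂ)))⁻¹ = diagonal (fun i => (((x i)⁻¹ : ℝ) : ℂ)) := by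
  refine inv_eq_left_inv ?_
  rw [diagonal_mul_diagonal, ← diagonal_one]
  congr 1; ext i
  rw [← Complex.ofReal_mul, inv_mul_cancel₀ (hx i), Complex.ofReal_one]

/-- Log-convexity of `t ↦ det (Wᴴ D ^ t W)` for a positive diagonal matrix `D`. -/
theorem det_weighted_gram_rpow_re_le (W : Matrix n m ℂ) (d : n → ℝ) (hd : ∀ i, 0 < d i)
    {t : ℝ} (ht0 : 0 ≤ t) (ht1 : t ≤ 1) (hW : 0 < (Wᴴ * W).det.re) :
    (Wᴴ * diagonal (fun i => ((d i ^ t : ℝ) : ℂ)) * W).det.re ≤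
      (Wᴴ * W).det.re ^ (1 - t) *
        (Wᴴ * diagonal (fun i => (d i : ℂ)) * W).det.re ^ t := by
  have hk : (0 : ℝ) < ((Fintype.card m).factorial : ℝ) := by positivity
  have hS : 0 < ∑ f : m → n, Complex.normSq (W.submatrix f id).det := by
    rw [← factorial_mul_det_gram_re]; positivity
  have h := sum_mul_rpow_le_rpow_mul_rpow Finset.univ
    (fun f : m → n => Complex.normSq (W.submatrix f id).det) (fun f => ∏ i, d (f i))
    (fun f _ => Complex.normSq_nonneg _) (fun f _ => Finset.prod_pos fun i _ => hd _) ht0 ht1 hS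
  have hD : 0 ≤ (Wᴴ * diagonal (fun i => (d i : ℂ)) * W).det.re := by
    refine nonneg_of_mul_nonneg_right ?_ hk
    rw [factorial_mul_det_weighted_gram_re]
    exact Finset.sum_nonneg fun f _ =>
      mul_nonneg (Finset.prod_nonneg fun i _ => (hd _).le) (Complex.normSq_nonneg _)
  simp only [← Real.finsetProd_rpow _ _ (fun i _ => (hd _).le)] at h
  rw [← factorial_mul_det_weighted_gram_re W (fun i => d i ^ t),
    ← factorial_mul_det_weighted_gram_re, ← factorial_mul_det_gram_re,
    Real.mul_rpow hk.le hW.le, Real.mul_rpow hk.le hD, mul_mul_mul_comm, ← Real.rpow_add hk,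
    sub_add_cancel, Real.rpow_one] at h
  exact le_of_mul_le_mul_left h hk

/-- The arithmetic-geometric mean inequality comparing the determinant of a positive semidefinite
matrix with a weighted trace. -/
theorem PosSemidef.det_re_rpow_inv_card_le [Nonempty m] {P : Matrix m m ℂ} (hP : P.PosSemidef)
    (w : m → ℝ) (hw : ∀ i, 0 < w i) :
    P.det.re ^ ((Fintype.card m : ℝ)⁻¹) ≤ (∏ i, w i) ^ ((Fintype.card m : ℝ)⁻¹) *
      ((∑ i, (P i i).re / w i) / Fintype.card m) := by
  set D : Matrix m m ℂ := diagonal fun i => (((√(w i))⁻¹ : ℝ) : ℂ) with hD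
  have hDH : Dᴴ = D := conjTranspose_diagonal_ofReal _
  have hQ : (D * P * D).PosSemidef := by
    have h := hP.conjTranspose_mul_mul_same D
    rwa [hDH] at h
  have hwp : 0 < ∏ i, w i := Finset.prod_pos fun i _ => hw i
  have hdet : (D * P * D).det.re = P.det.re / ∏ i, w i := by
    have : (D * P * D).det = (((∏ i, w i)⁻¹ : ℝ) : ℂ) * P.det := by
      rw [det_mul, det_mul, mul_comm D.det, mul_assoc, mul_comm, hD, det_diagonal,
        ← Finset.prod_mul_distrib]
      congr 1
      rw [← Finset.prod_inv_distrib, Complex.ofReal_prod]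
      refine Finset.prod_congr rfl fun i _ => ?_
      rw [← Complex.ofReal_mul, ← mul_inv, Real.mul_self_sqrt (hw i).le]
    rw [this, Complex.re_ofReal_mul]
    field_simp
  have htr : (D * P * D).trace.re = ∑ i, (P i i).re / w i := by
    simp only [trace, diag_apply, hD, mul_diagonal, diagonal_mul, Complex.re_sum]
    refine Finset.sum_congr rfl fun i _ => ?_
    rw [mul_comm, ← mul_assoc, ← Complex.ofReal_mul, ← mul_inv, Real.mul_self_sqrt (hw i).le,
      Complex.re_ofReal_mul]
    field_simp
  have hev := hQ.eigenvalues_nonneg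
  have hdet' : (D * P * D).det.re = ∏ i, hQ.1.eigenvalues i := by
    rw [hQ.1.det_eq_prod_eigenvalues]
    simp only [Complex.coe_algebraMap, ← Complex.ofReal_prod, Complex.ofReal_re]
  have htr' : (D * P * D).trace.re = ∑ i, hQ.1.eigenvalues i := by
    rw [hQ.1.trace_eq_sum_eigenvalues]
    simp
  have h := Real.geom_mean_le_arith_mean Finset.univ (fun _ => 1) hQ.1.eigenvalues
    (fun _ _ => zero_le_one) (by simp [Fintype.card_pos]) (fun i _ => hev i)
  simp only [Real.rpow_one, one_mul, Finset.sum_const, Finset.card_univ, nsmul_eq_mul,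
    mul_one] at h
  rw [← hdet', ← htr', hdet, htr] at h
  have hPd : 0 ≤ P.det.re := by
    have := hP.det_nonneg
    exact (Complex.le_def.1 this).1
  rw [Real.div_rpow hPd hwp.le, div_le_iff₀ (Real.rpow_pos_of_pos hwp _)] at h
  rw [mul_comm]
  exact h

end Matrix

theorem prod_castLE_le_prod_of_injective {k n : ℕ} (hkn : k ≤ n) {x : Fin n → ℝ}
    (hx : Monotone x) (hpos : ∀ i, 0 < x i) {g : Fin k → Fin n} (hg : Function.Injective g) :
    ∏ i : Fin k, x (Fin.castLE hkn i) ≤ ∏ i, x (g i) := by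
  have hS : (Finset.univ.image g).card = k := by
    rw [Finset.card_image_of_injective _ hg, Finset.card_univ, Fintype.card_fin]
  set e := (Finset.univ.image g).orderEmbOfFin hS with he
  have hle : ∀ j (hj : j < k), j ≤ (e ⟨j, hj⟩ : ℕ) := by
    intro j
    induction j with
    | zero => exact fun _ => Nat.zero_le _
    | succ j ih =>
      intro hj
      have hlt : e ⟨j, by omega⟩ < e ⟨j + 1, hj⟩ := e.strictMono (by simp)
      exact (ih (by omega)).trans_lt hlt
  have hprod : ∏ i, x (g i) = ∏ i, x (e i) := by
    rw [← Finset.prod_image (s := Finset.univ) (g := g) (f := x) hg.injOn,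
      ← Finset.prod_image (s := Finset.univ) (g := e) (f := x) e.injective.injOn,
      he, Finset.image_orderEmbOfFin_univ]
  rw [hprod]
  exact Finset.prod_le_prod (fun i _ => (hpos _).le) fun i _ => hx (hle i i.2)

section

open Matrix

variable {n k : ℕ} {A B : Matrix (Fin n) (Fin n) ℂ}

theorem monotone_eigUp (hA : A.IsHermitian) : Monotone (eigUp hA) :=
  Tuple.monotone_sort hA.eigenvalues

theorem prodSmall_eq_prod_castLE (hA : A.IsHermitian) (hkn : k ≤ n) :
    prodSmall A k = ∏ i : Fin k, eigUp hA (Fin.castLE hkn i) := by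
  rw [prodSmall, dif_pos hA]
  have : Finset.univ.filter (fun i : Fin n => (i : ℕ) < k) =
      Finset.univ.map (Fin.castLEEmb hkn) := by
    ext i
    simp only [Finset.mem_filter, Finset.mem_univ, true_and, Finset.mem_map, Fin.castLEEmb_apply]
    exact ⟨fun h => ⟨⟨i, h⟩, rfl⟩, by rintro ⟨j, rfl⟩; exact j.2⟩
  rw [this, Finset.prod_map]
  rfl

theorem prodSmall_pos (hA : A.PosDef) (hkn : k ≤ n) : 0 < prodSmall A k := by
  rw [prodSmall_eq_prod_castLE hA.1 hkn]
  exact Finset.prod_pos fun i _ => hA.eigenvalues_pos _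

theorem prodSmall_le_prod_eigenvalues (hA : A.PosDef) (hkn : k ≤ n) {f : Fin k → Fin n}
    (hf : Function.Injective f) : prodSmall A k ≤ ∏ i, hA.1.eigenvalues (f i) := by
  rw [prodSmall_eq_prod_castLE hA.1 hkn]
  have h := prod_castLE_le_prod_of_injective hkn (monotone_eigUp hA.1)
    (fun i => hA.eigenvalues_pos _) ((Tuple.sort hA.1.eigenvalues).symm.injective.comp hf)
  simpa [eigUp] using h

theorem Matrix.IsHermitian.exists_diagonalization (hA : A.IsHermitian) :
    ∃ U : Matrix (Fin n) (Fin n) ℂ, Uᴴ * U = 1 ∧ U * Uᴴ = 1 ∧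
      A = U * diagonal (fun i => (hA.eigenvalues i : ℂ)) * Uᴴ ∧
      ∀ f : ℝ → ℝ, cfc f A = U * diagonal (fun i => (f (hA.eigenvalues i) : ℂ)) * Uᴴ := by
  refine ⟨hA.eigenvectorUnitary, Unitary.coe_star_mul_self _, Unitary.coe_mul_star_self _, ?_, ?_⟩
  · exact hA.spectral_theorem
  · intro f
    rw [hA.cfc_eq]
    rfl

/-- Compressions of `A⁻¹` to `k`-dimensional subspaces have determinant at most the inverse of the
product of the `k` smallest eigenvalues of `A`. -/
theorem prodSmall_mul_det_compression_inv_le (hA : A.PosDef) (hkn : k ≤ n)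
    {V : Matrix (Fin n) (Fin k) ℂ} (hV : Vᴴ * V = 1) :
    prodSmall A k * (Vᴴ * A⁻¹ * V).det.re ≤ 1 := by
  obtain ⟨U, hU, hU', hAU, -⟩ := hA.1.exists_diagonalization
  set lam := hA.1.eigenvalues
  have hpos : ∀ i, 0 < lam i := hA.eigenvalues_pos
  have hinv : A⁻¹ = U * diagonal (fun i => (((lam i)⁻¹ : ℝ) : ℂ)) * Uᴴ := by
    rw [hAU, Matrix.mul_inv_rev, Matrix.mul_inv_rev, inv_diagonal_ofReal fun i => (hpos i).ne',
      inv_eq_left_inv hU, inv_eq_left_inv hU', Matrix.mul_assoc]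
  set W := Uᴴ * V with hW
  have hWW : Wᴴ * W = 1 := by
    rw [hW, conjTranspose_mul, conjTranspose_conjTranspose, Matrix.mul_assoc,
      ← Matrix.mul_assoc U, hU', Matrix.one_mul, hV]
  have hcomp : Vᴴ * A⁻¹ * V = Wᴴ * diagonal (fun i => (((lam i)⁻¹ : ℝ) : ℂ)) * W := by
    rw [hinv, hW, conjTranspose_mul, conjTranspose_conjTranspose]
    simp only [Matrix.mul_assoc]
  have h1 := factorial_mul_det_gram_re W
  rw [hWW, det_one, Complex.one_re, mul_one] at h1
  have h2 := factorial_mul_det_weighted_gram_re W (fun i => (lam i)⁻¹)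
  have hk : (0 : ℝ) < ((Fintype.card (Fin k)).factorial : ℝ) := by positivity
  refine le_of_mul_le_mul_left ?_ hk
  rw [mul_one, mul_left_comm, hcomp, h2, h1, Finset.mul_sum]
  refine Finset.sum_le_sum fun f _ => ?_
  by_cases hf : Function.Injective f
  · rw [← mul_assoc]
    refine mul_le_of_le_one_left (Complex.normSq_nonneg _) ?_
    rw [Finset.prod_inv_distrib, mul_inv_le_iff₀ (Finset.prod_pos fun i _ => hpos _), one_mul]
    exact prodSmall_le_prod_eigenvalues hA hkn hf
  · have : (W.submatrix f id).det = 0 := by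
      simp only [Function.Injective, not_forall] at hf
      obtain ⟨i, j, hij, hne⟩ := hf
      exact det_zero_of_row_eq hne (by ext l; simp [hij])
    simp [this]

theorem Matrix.PosDef.exists_sharp_eq (hA : A.PosDef) (hB : B.PosDef) :
    ∃ (T : Matrix (Fin n) (Fin n) ℂ) (d : Fin n → ℝ), IsUnit T ∧ (∀ i, 0 < d i) ∧
      A = T * Tᴴ ∧ B = T * diagonal (fun i => (d i : ℂ)) * Tᴴ ∧
      ∀ α : ℝ, sharp α A B = T * diagonal (fun i => ((d i ^ α : ℝ) : ℂ)) * Tᴴ := by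
  obtain ⟨U, hU, hU', hAU, hcfc⟩ := hA.1.exists_diagonalization
  set lam := hA.1.eigenvalues
  have hpos : ∀ i, 0 < lam i := hA.eigenvalues_pos
  set R := sqrtM A with hR
  set J := invSqrtM A with hJ
  have hRe : R = U * diagonal (fun i => ((√(lam i) : ℝ) : ℂ)) * Uᴴ := hcfc _
  have hJe : J = U * diagonal (fun i => (((√(lam i))⁻¹ : ℝ) : ℂ)) * Uᴴ := hcfc _
  have herm (x : Fin n → ℝ) : (U * diagonal (fun i => (x i : ℂ)) * Uᴴ)ᴴ =
      U * diagonal (fun i => (x i : ℂ)) * Uᴴ := by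
    rw [conjTranspose_mul, conjTranspose_mul, conjTranspose_diagonal_ofReal,
      conjTranspose_conjTranspose, Matrix.mul_assoc]
  have hmul (x y : Fin n → ℝ) : U * diagonal (fun i => (x i : ℂ)) * Uᴴ *
      (U * diagonal (fun i => (y i : ℂ)) * Uᴴ) =
      U * diagonal (fun i => ((x i * y i : ℝ) : ℂ)) * Uᴴ := by
    calc
      _ = U * (diagonal (fun i => (x i : ℂ)) * (Uᴴ * U) * diagonal (fun i => (y i : ℂ))) * Uᴴ := by
        simp only [Matrix.mul_assoc]
      _ = _ := by
        rw [hU, Matrix.mul_one, diagonal_mul_diagonal]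
        simp
  have hRH : Rᴴ = R := by rw [hRe]; exact herm _
  have hJH : Jᴴ = J := by rw [hJe]; exact herm _
  have hRR : R * R = A := by
    rw [hRe, hmul]
    simp only [Real.mul_self_sqrt (hpos _).le]
    exact hAU.symm
  have hRJ : R * J = 1 := by
    rw [hRe, hJe, hmul]
    simp only [mul_inv_cancel₀ (Real.sqrt_pos.2 (hpos _)).ne']
    simpa using hU'
  have hJR : J * R = 1 := mul_eq_one_comm.1 hRJ
  have hRunit : IsUnit R := IsUnit.of_mul_eq_one _ hRJ
  have hJunit : IsUnit J := IsUnit.of_mul_eq_one _ hJR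
  have hC : (J * B * J).PosDef := by
    have h := (hJunit.posDef_star_left_conjugate_iff (x := B)).2 hB
    rwa [star_eq_conjTranspose, hJH] at h
  obtain ⟨W, hW, hW', hCW, hcfcC⟩ := hC.1.exists_diagonalization
  have hWunit : IsUnit W := IsUnit.of_mul_eq_one _ hW'
  refine ⟨R * W, hC.1.eigenvalues, hRunit.mul hWunit, hC.eigenvalues_pos, ?_, ?_, fun α => ?_⟩
  · rw [conjTranspose_mul, hRH, Matrix.mul_assoc, ← Matrix.mul_assoc W, hW', Matrix.one_mul, hRR]
  · calc
      B = R * J * B * (J * R) := by rw [hRJ, hJR, Matrix.one_mul, Matrix.mul_one]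
      _ = R * (J * B * J) * R := by simp only [Matrix.mul_assoc]
      _ = R * (W * diagonal (fun i => (hC.1.eigenvalues i : ℂ)) * Wᴴ) * R := by rw [← hCW]
      _ = _ := by simp only [conjTranspose_mul, hRH, Matrix.mul_assoc]
  · rw [sharp, ← hR, ← hJ, hcfcC]
    simp only [conjTranspose_mul, hRH, Matrix.mul_assoc]

theorem posDef_mul_diagonal_mul_conjTranspose {T : Matrix (Fin n) (Fin n) ℂ} (hT : IsUnit T)
    {d : Fin n → ℝ} (hd : ∀ i, 0 < d i) :
    (T * diagonal (fun i => (d i : ℂ)) * Tᴴ).PosDef := by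
  have h : (diagonal (fun i => (d i : ℂ))).PosDef := PosDef.diagonal fun i => by
    exact_mod_cast hd i
  exact (hT.posDef_star_right_conjugate_iff (x := diagonal (fun i => (d i : ℂ)))).2 h

/-- Compressions of a weighted geometric mean to `k`-dimensional subspaces have determinant at
least the weighted geometric mean of the products of the `k` smallest eigenvalues. -/
theorem prodSmall_rpow_mul_prodSmall_rpow_le (hkn : k ≤ n) {T : Matrix (Fin n) (Fin n) ℂ}
    (hT : IsUnit T) {d : Fin n → ℝ} (hd : ∀ i, 0 < d i) {t : ℝ} (ht0 : 0 ≤ t) (ht1 : t ≤ 1)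
    {V : Matrix (Fin n) (Fin k) ℂ} (hV : Vᴴ * V = 1) :
    prodSmall (T * Tᴴ) k ^ (1 - t) *
        prodSmall (T * diagonal (fun i => (d i : ℂ)) * Tᴴ) k ^ t ≤
      (Vᴴ * (T * diagonal (fun i => ((d i ^ t : ℝ) : ℂ)) * Tᴴ) * V).det.re := by
  have hTdet : IsUnit T.det := (isUnit_iff_isUnit_det T).1 hT
  set Z := T⁻¹ * V with hZ
  have hA : (T * Tᴴ).PosDef := by
    simpa using posDef_mul_diagonal_mul_conjTranspose hT (d := fun _ => 1) (fun _ => one_pos)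
  have hB := posDef_mul_diagonal_mul_conjTranspose hT hd
  have hZZ : Vᴴ * (T * Tᴴ)⁻¹ * V = Zᴴ * Z := by
    rw [hZ, Matrix.mul_inv_rev, conjTranspose_mul, conjTranspose_nonsing_inv]
    simp only [Matrix.mul_assoc]
  have hZdZ : Vᴴ * (T * diagonal (fun i => (d i : ℂ)) * Tᴴ)⁻¹ * V =
      Zᴴ * diagonal (fun i => (((d i)⁻¹ : ℝ) : ℂ)) * Z := by
    rw [hZ, Matrix.mul_inv_rev, Matrix.mul_inv_rev, inv_diagonal_ofReal fun i => (hd i).ne',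
      conjTranspose_mul, conjTranspose_nonsing_inv]
    simp only [Matrix.mul_assoc]
  have hVrec : T * Z = V := mul_nonsing_inv_cancel_left T V hTdet
  have hcs := normSq_det_conjTranspose_mul_le
    (diagonal (fun i => ((√(d i ^ t) : ℝ) : ℂ)) * (Tᴴ * V))
    (diagonal (fun i => ((√((d i)⁻¹ ^ t) : ℝ) : ℂ)) * Z)
  have hgram (x : Fin n → ℝ) (hx : ∀ i, 0 ≤ x i) (Y : Matrix (Fin n) (Fin k) ℂ) :
      (diagonal (fun i => ((√(x i) : ℝ) : ℂ)) * Y)ᴴ *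
        (diagonal (fun i => ((√(x i) : ℝ) : ℂ)) * Y) =
      Yᴴ * diagonal (fun i => (x i : ℂ)) * Y := by
    rw [conjTranspose_mul, conjTranspose_diagonal_ofReal (fun i => √(x i)), Matrix.mul_assoc,
      ← Matrix.mul_assoc (diagonal _) (diagonal _), diagonal_mul_diagonal, ← Matrix.mul_assoc]
    simp only [← Complex.ofReal_mul, Real.mul_self_sqrt (hx _)]
  have hcross : (diagonal (fun i => ((√(d i ^ t) : ℝ) : ℂ)) * (Tᴴ * V))ᴴ *
      (diagonal (fun i => ((√((d i)⁻¹ ^ t) : ℝ) : ℂ)) * Z) = 1 := by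
    rw [conjTranspose_mul, conjTranspose_diagonal_ofReal (fun i => √(d i ^ t)), Matrix.mul_assoc,
      ← Matrix.mul_assoc (diagonal _) (diagonal _), diagonal_mul_diagonal]
    have : (fun i => ((√(d i ^ t) : ℝ) : ℂ) * ((√((d i)⁻¹ ^ t) : ℝ) : ℂ)) = fun _ => 1 := by
      ext i
      have := Real.rpow_pos_of_pos (hd i) t
      rw [← Complex.ofReal_mul, ← Real.sqrt_mul this.le, Real.inv_rpow (hd i).le,
        mul_inv_cancel₀ this.ne', Real.sqrt_one, Complex.ofReal_one]
    rw [this, diagonal_one, Matrix.one_mul, conjTranspose_mul, conjTranspose_conjTranspose,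
      Matrix.mul_assoc, hVrec, hV]
  rw [hcross, hgram _ (fun i => (Real.rpow_pos_of_pos (hd i) t).le),
    hgram (fun i => (d i)⁻¹ ^ t) (fun i => (Real.rpow_pos_of_pos (inv_pos.2 (hd i)) t).le),
    det_one, map_one] at hcs
  have hG : (Tᴴ * V)ᴴ * diagonal (fun i => ((d i ^ t : ℝ) : ℂ)) * (Tᴴ * V) =
      Vᴴ * (T * diagonal (fun i => ((d i ^ t : ℝ) : ℂ)) * Tᴴ) * V := by
    simp only [conjTranspose_mul, conjTranspose_conjTranspose, Matrix.mul_assoc]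
  rw [hG] at hcs
  have hgramdet : 0 < (Zᴴ * Z).det.re := by
    have h := normSq_det_conjTranspose_mul_le (Tᴴ * V) Z
    have e : (Tᴴ * V)ᴴ * Z = 1 := by
      rw [conjTranspose_mul, conjTranspose_conjTranspose, Matrix.mul_assoc, hVrec, hV]
    rw [e, det_one, map_one] at h
    have h0 : 0 ≤ (Zᴴ * Z).det.re :=
      (Complex.le_def.1 (posSemidef_conjTranspose_mul_self Z).det_nonneg).1
    refine h0.lt_of_ne fun h' => ?_
    rw [← h', mul_zero] at h
    linarith
  have hholder := det_weighted_gram_rpow_re_le Z (fun i => (d i)⁻¹) (fun i => inv_pos.2 (hd i))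
    ht0 ht1 hgramdet
  have hbA := prodSmall_mul_det_compression_inv_le hA hkn hV
  have hbB := prodSmall_mul_det_compression_inv_le hB hkn hV
  rw [hZZ] at hbA
  rw [hZdZ] at hbB
  have hpA := prodSmall_pos hA hkn
  have hpB := prodSmall_pos hB hkn
  set a := prodSmall (T * Tᴴ) k
  set b := prodSmall (T * diagonal (fun i => (d i : ℂ)) * Tᴴ) k
  set g := (Vᴴ * (T * diagonal (fun i => ((d i ^ t : ℝ) : ℂ)) * Tᴴ) * V).det.re
  set x := (Zᴴ * Z).det.re
  set y := (Zᴴ * diagonal (fun i => (((d i)⁻¹ : ℝ) : ℂ)) * Z).det.re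
  set z := (Zᴴ * diagonal (fun i => (((d i)⁻¹ ^ t : ℝ) : ℂ)) * Z).det.re
  have hy : 0 ≤ y := by
    have h : (diagonal (fun i => (((d i)⁻¹ : ℝ) : ℂ))).PosSemidef :=
      PosSemidef.diagonal fun i => Complex.zero_le_real.2 (inv_pos.2 (hd i)).le
    exact (Complex.le_def.1 (h.conjTranspose_mul_mul_same Z).det_nonneg).1
  have hg : 0 ≤ g := by
    have h : (Vᴴ * (T * diagonal (fun i => ((d i ^ t : ℝ) : ℂ)) * Tᴴ) * V).PosSemidef :=
      (posDef_mul_diagonal_mul_conjTranspose hT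
        (fun i => Real.rpow_pos_of_pos (hd i) t)).posSemidef.conjTranspose_mul_mul_same V
    exact (Complex.le_def.1 h.det_nonneg).1
  have hxy : a ^ (1 - t) * b ^ t * (x ^ (1 - t) * y ^ t) ≤ 1 := by
    rw [mul_mul_mul_comm, ← Real.mul_rpow hpA.le hgramdet.le, ← Real.mul_rpow hpB.le hy]
    exact mul_le_one₀ (Real.rpow_le_one (mul_nonneg hpA.le hgramdet.le) hbA (by linarith))
      (Real.rpow_nonneg (mul_nonneg hpB.le hy) _)
      (Real.rpow_le_one (mul_nonneg hpB.le hy) hbB ht0)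
  have hab : 0 ≤ a ^ (1 - t) * b ^ t := by positivity
  calc
    a ^ (1 - t) * b ^ t ≤ a ^ (1 - t) * b ^ t * (g * z) := le_mul_of_one_le_right hab hcs
    _ ≤ a ^ (1 - t) * b ^ t * (g * (x ^ (1 - t) * y ^ t)) := by gcongr
    _ = g * (a ^ (1 - t) * b ^ t * (x ^ (1 - t) * y ^ t)) := by ring
    _ ≤ g := mul_le_of_le_one_right hg hxy

theorem Matrix.IsHermitian.exists_compression_eq_diagonal (hA : A.IsHermitian) (hkn : k ≤ n) :
    ∃ V : Matrix (Fin n) (Fin k) ℂ, Vᴴ * V = 1 ∧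
      Vᴴ * A * V = diagonal fun i => (eigUp hA (Fin.castLE hkn i) : ℂ) := by
  obtain ⟨U, hU, -, hAU, -⟩ := hA.exists_diagonalization
  set s : Fin k → Fin n := fun i => Tuple.sort hA.eigenvalues (Fin.castLE hkn i) with hs
  have hinj : Function.Injective s :=
    (Tuple.sort hA.eigenvalues).injective.comp (Fin.castLE_injective hkn)
  have hcomp (M : Matrix (Fin n) (Fin n) ℂ) :
      (U.submatrix id s)ᴴ * M * U.submatrix id s = (Uᴴ * M * U).submatrix s s := by
    ext i j
    simp [Matrix.mul_apply]
  refine ⟨U.submatrix id s, ?_, ?_⟩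
  · have h := hcomp 1
    rw [Matrix.mul_one, Matrix.mul_one, hU] at h
    rw [h, submatrix_one _ hinj]
  · have hD : Uᴴ * A * U = diagonal (fun i => (hA.eigenvalues i : ℂ)) := by
      conv_lhs => rw [hAU]
      calc
        _ = Uᴴ * U * diagonal (fun i => (hA.eigenvalues i : ℂ)) * (Uᴴ * U) := by
          simp only [Matrix.mul_assoc]
        _ = _ := by rw [hU, Matrix.one_mul, Matrix.mul_one]
    rw [hcomp, hD, submatrix_diagonal _ _ hinj]
    rfl

end

open Matrix MeasureTheory

/-- A function continuous on `[0, 1]` is integrable for a probability measure carried by `[0, 1]`. -/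
theorem integrable_of_continuousOn_Icc {E : Type*} [NormedAddCommGroup E]
    {ν : Measure ℝ} [IsProbabilityMeasure ν] (hν : ∀ᵐ α ∂ν, α ∈ Set.Icc (0 : ℝ) 1)
    {f : ℝ → E} (hf : ContinuousOn f (Set.Icc (0 : ℝ) 1)) : Integrable f ν := by
  have h := hf.integrableOn_compact (μ := ν) isCompact_Icc
  rwa [IntegrableOn, Measure.restrict_eq_self_of_ae_mem hν] at h

theorem integrable_linearMap_comp {ι E : Type*} [Fintype ι] [NormedAddCommGroup E] [NormedSpace ℝ E]
    {ν : Measure ℝ} (L : (ι → ℝ) →ₗ[ℝ] E) {g : ℝ → ι → ℝ} (hg : Integrable g ν) :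
    Integrable (fun α => L (g α)) ν :=
  L.toContinuousLinearMap.integrable_comp hg

theorem integral_linearMap_comp {ι E : Type*} [Fintype ι] [NormedAddCommGroup E] [NormedSpace ℝ E]
    [CompleteSpace E] {ν : Measure ℝ} (L : (ι → ℝ) →ₗ[ℝ] E) {g : ℝ → ι → ℝ}
    (hg : Integrable g ν) : ∫ α, L (g α) ∂ν = L (∫ α, g α ∂ν) :=
  L.toContinuousLinearMap.integral_comp_comm hg

/-- The linear map `d ↦ T diag(d) Tᴴ`. -/
noncomputable def diagonalCongruence {n : ℕ} (T : Matrix (Fin n) (Fin n) ℂ) :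
    (Fin n → ℝ) →ₗ[ℝ] Matrix (Fin n) (Fin n) ℂ where
  toFun d := T * diagonal (fun i => (d i : ℂ)) * Tᴴ
  map_add' d e := by
    rw [← Matrix.add_mul, ← Matrix.mul_add, diagonal_add]
    simp
  map_smul' c d := by
    have : diagonal (fun i => (((c • d) i : ℝ) : ℂ)) = c • diagonal (fun i => (d i : ℂ)) := by
      rw [← diagonal_smul]
      congr 1; ext i; simp
    rw [this, Matrix.mul_smul, Matrix.smul_mul, RingHom.id_apply]

/-- The weighted trace of the compression of `Y` along `V`. -/
noncomputable def weightedCompressionTrace {n k : ℕ} (V : Matrix (Fin n) (Fin k) ℂ)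
    (w : Fin k → ℝ) : Matrix (Fin n) (Fin n) ℂ →ₗ[ℝ] ℝ where
  toFun Y := ∑ i, ((Vᴴ * Y * V) i i).re / w i
  map_add' Y Z := by
    simp [Matrix.mul_add, Matrix.add_mul, add_div, Finset.sum_add_distrib]
  map_smul' c Y := by
    simp [Matrix.mul_smul, Matrix.smul_mul, Finset.mul_sum, mul_div_assoc]

theorem stmt_11 {n : ℕ} (ν : MeasureTheory.Measure ℝ) [MeasureTheory.IsProbabilityMeasure ν]
    (hν : ν (Set.Icc (0 : ℝ) 1) = 1)
    (A B : Matrix (Fin n) (Fin n) ℂ) (hA : A.PosDef) (hB : B.PosDef)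
    (k : ℕ) (hk1 : 1 ≤ k) (hkn : k ≤ n) :
    ∫ α, (prodSmall A k ^ ((k : ℝ)⁻¹)) ^ (1 - α) * (prodSmall B k ^ ((k : ℝ)⁻¹)) ^ α ∂ν
      ≤ prodSmall (gmean ν A B) k ^ ((k : ℝ)⁻¹) := by
  have hae : ∀ᵐ α ∂ν, α ∈ Set.Icc (0 : ℝ) 1 :=
    (mem_ae_iff_prob_eq_one measurableSet_Icc).2 hν
  obtain ⟨T, d, hT, hd, hAT, hBT, hsharp⟩ := hA.exists_sharp_eq hB
  have hpow (i : Fin n) : Continuous fun α : ℝ => d i ^ α :=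
    Real.continuous_const_rpow (hd i).ne'
  have hdint : Integrable (fun (α : ℝ) (i : Fin n) => d i ^ α) ν :=
    integrable_of_continuousOn_Icc hae (continuous_pi hpow).continuousOn
  set L := diagonalCongruence T
  have hsharpL : (fun α => sharp α A B) = fun α => L fun i => d i ^ α := funext hsharp
  have hM : gmean ν A B = L (∫ α, (fun i => d i ^ α) ∂ν) := by
    rw [gmean, hsharpL]
    exact integral_linearMap_comp L hdint
  have hMpos : (gmean ν A B).PosDef := by
    rw [hM]
    refine posDef_mul_diagonal_mul_conjTranspose hT fun i => ?_
    rw [eval_integral fun i => integrable_of_continuousOn_Icc hae (hpow i).continuousOn]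
    simp only [Real.rpow_def_of_pos (hd i)]
    refine integral_exp_pos (f := fun α => Real.log (d i) * α) ?_
    simpa only [Real.rpow_def_of_pos (hd i)] using
      integrable_of_continuousOn_Icc hae (hpow i).continuousOn
  obtain ⟨V, hV, hVM⟩ := hMpos.1.exists_compression_eq_diagonal hkn
  set w : Fin k → ℝ := fun i => eigUp hMpos.1 (Fin.castLE hkn i)
  have hwpos : ∀ i, 0 < w i := fun i => hMpos.eigenvalues_pos _
  have hprod : prodSmall (gmean ν A B) k = ∏ i, w i := prodSmall_eq_prod_castLE hMpos.1 hkn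
  set φ := weightedCompressionTrace V w
  have hφapp (Y : Matrix (Fin n) (Fin n) ℂ) : φ Y = ∑ i, ((Vᴴ * Y * V) i i).re / w i := rfl
  have hφM : φ (gmean ν A B) = k := by
    rw [hφapp, hVM]
    simp only [diagonal_apply_eq, Complex.ofReal_re]
    change ∑ i, w i / w i = k
    simp [(hwpos _).ne']
  have hφsharp : (fun α => φ (sharp α A B)) = fun α => (φ ∘ₗ L) fun i => d i ^ α :=
    funext fun α => congrArg φ (hsharp α)
  have hφint : Integrable (fun α => φ (sharp α A B)) ν :=
    hφsharp ▸ integrable_linearMap_comp (φ ∘ₗ L) hdint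
  have hk0 : (0 : ℝ) < k := by exact_mod_cast hk1
  have : Nonempty (Fin k) := ⟨⟨0, hk1⟩⟩
  have hpA := prodSmall_pos hA hkn
  have hpB := prodSmall_pos hB hkn
  have hpoint (α : ℝ) (hα : α ∈ Set.Icc (0 : ℝ) 1) :
      (prodSmall A k ^ ((k : ℝ)⁻¹)) ^ (1 - α) * (prodSmall B k ^ ((k : ℝ)⁻¹)) ^ α ≤
        (∏ i, w i) ^ ((k : ℝ)⁻¹) * (φ (sharp α A B) / k) := by
    have hdet := prodSmall_rpow_mul_prodSmall_rpow_le hkn hT hd hα.1 hα.2 hV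
    rw [← hAT, ← hBT, ← hsharp] at hdet
    have hpsd : (Vᴴ * sharp α A B * V).PosSemidef := by
      rw [hsharp]
      exact (posDef_mul_diagonal_mul_conjTranspose hT
        fun i => Real.rpow_pos_of_pos (hd i) α).posSemidef.conjTranspose_mul_mul_same V
    have hamgm := hpsd.det_re_rpow_inv_card_le w hwpos
    rw [Fintype.card_fin, ← hφapp] at hamgm
    refine le_trans ?_ hamgm
    rw [← Real.rpow_mul hpA.le, ← Real.rpow_mul hpB.le, mul_comm _ (1 - α), mul_comm _ α,
      Real.rpow_mul hpA.le, Real.rpow_mul hpB.le, ← Real.mul_rpow (by positivity) (by positivity)]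
    exact Real.rpow_le_rpow (by positivity) hdet (by positivity)
  have hcont : Continuous fun α : ℝ =>
      (prodSmall A k ^ ((k : ℝ)⁻¹)) ^ (1 - α) * (prodSmall B k ^ ((k : ℝ)⁻¹)) ^ α :=
    ((Real.continuous_const_rpow (Real.rpow_pos_of_pos hpA _).ne').comp
      (continuous_const.sub continuous_id)).mul
      (Real.continuous_const_rpow (Real.rpow_pos_of_pos hpB _).ne')
  calc
    _ ≤ ∫ α, (∏ i, w i) ^ ((k : ℝ)⁻¹) * (φ (sharp α A B) / k) ∂ν := by
      refine integral_mono_ae (integrable_of_continuousOn_Icc hae hcont.continuousOn)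
        ((hφint.div_const _).const_mul _) ?_
      filter_upwards [hae] with α hα using hpoint α hα
    _ = (∏ i, w i) ^ ((k : ℝ)⁻¹) * (φ (gmean ν A B) / k) := by
      rw [integral_const_mul, integral_div, hφsharp, integral_linearMap_comp (φ ∘ₗ L) hdint, hM,
        LinearMap.comp_apply]
    _ = prodSmall (gmean ν A B) k ^ ((k : ℝ)⁻¹) := by
      rw [hφM, div_self hk0.ne', mul_one, hprod]
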